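/- Let ρ_CTN = (E_A ⊗ E_B ⊗ E_C)(ρ_BTN) be a triangle network state with local channels, where ρ_BTN is a basic triangle network state and E_A, E_B, E_C are quantum channels from the parties' d²-dimensional systems to C^{n_A}, C^{n_B}, C^{n_C}. Let {A_i}, {B_j}, {C_k} be finite families of Hermitian observables on C^{n_A}, C^{n_B}, C^{n_C}, and let γ_E, γ_F, γ_G denote the off-diagonal blocks of Γ({A_i, B_j, C_k}, ρ_CTN) between the A–B, A–C and B–C sectors. Then there exist Hermitian matrices Υ^A_1, Υ^A_2 (of size equal to the number of A-observables), Υ^B_1, Υ^B_2, Υ^C_1, Υ^C_2 such that Γ({A_i, B_j, C_k}, ρ_CTN) = S_c + S_b + S_a, where S_c has diagonal blocks (Υ^A_2, Υ^B_1, 0), off-diagonal block γ_E between A and B (and γ_E† between B and A) and zeros elsewhere; S_b has diagonal blocks (Υ^A_1, 0, Υ^C_2) and off-diagonal block γ_F between A and C; S_a has diagonal blocks (0, Υ^B_2, Υ^C_1) and off-diagonal block γ_G between B and C; and each of S_a, S_b, S_c is positive semidefinite. -/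

import Mathlib

open Matrix Kronecker BigOperators
open scoped ComplexOrder

noncomputable section

/-- Covariance matrix of a family of observables `M` in the state `ρ`. -/
def covMat {n ι : Type*} [Fintype n] (M : ι → Matrix n n ℂ) (ρ : Matrix n n ℂ) :
    Matrix ι ι ℂ :=
  Matrix.of fun i j => (M i * M j * ρ).trace - (M i * ρ).trace * (M j * ρ).trace

/-- A density matrix: positive semidefinite with unit trace. -/
def IsDensity {n : Type*} [Fintype n] (ρ : Matrix n n ℂ) : Prop :=
  ρ.PosSemidef ∧ ρ.trace = 1

/-- Partial trace over the first tensor factor. -/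
def ptrace₁ {m n : Type*} [Fintype m] (M : Matrix (m × n) (m × n) ℂ) : Matrix n n ℂ :=
  Matrix.of fun i j => ∑ k, M (k, i) (k, j)

/-- Partial trace over the second tensor factor. -/
def ptrace₂ {m n : Type*} [Fintype n] (M : Matrix (m × n) (m × n) ℂ) : Matrix m m ℂ :=
  Matrix.of fun i j => ∑ k, M (i, k) (j, k)

/-- Index of a two-qudit space. -/
abbrev D2 (d : ℕ) := Fin d × Fin d

/-- Index of the six-factor triangle-network space, ordered C₂, A₁, A₂, B₁, B₂, C₁. -/
abbrev TriIdx (d : ℕ) := D2 d × (D2 d × D2 d)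

/-- The basic triangle network state `ρ_b ⊗ ρ_c ⊗ ρ_a`. -/
def btnState {d : ℕ} (ρa ρb ρc : Matrix (D2 d) (D2 d) ℂ) :
    Matrix (TriIdx d) (TriIdx d) ℂ :=
  ρb ⊗ₖ (ρc ⊗ₖ ρa)

/-- Embed an observable of Alice (acting on A₁A₂) into the global space. -/
def embedA {d : ℕ} (M : Matrix (D2 d) (D2 d) ℂ) : Matrix (TriIdx d) (TriIdx d) ℂ :=
  Matrix.of fun p q =>
    if p.1.1 = q.1.1 ∧ p.2.1.2 = q.2.1.2 ∧ p.2.2 = q.2.2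
    then M (p.1.2, p.2.1.1) (q.1.2, q.2.1.1) else 0

/-- Embed an observable of Bob (acting on B₁B₂) into the global space. -/
def embedB {d : ℕ} (M : Matrix (D2 d) (D2 d) ℂ) : Matrix (TriIdx d) (TriIdx d) ℂ :=
  Matrix.of fun p q =>
    if p.1 = q.1 ∧ p.2.1.1 = q.2.1.1 ∧ p.2.2.2 = q.2.2.2
    then M (p.2.1.2, p.2.2.1) (q.2.1.2, q.2.2.1) else 0

/-- Embed an observable of Charlie (acting on C₁C₂) into the global space. -/
def embedC {d : ℕ} (M : Matrix (D2 d) (D2 d) ℂ) : Matrix (TriIdx d) (TriIdx d) ℂ :=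
  Matrix.of fun p q =>
    if p.1.2 = q.1.2 ∧ p.2.1 = q.2.1 ∧ p.2.2.1 = q.2.2.1
    then M (p.2.2.2, p.1.1) (q.2.2.2, q.1.1) else 0

section marginals
variable {d : ℕ} (ρa ρb ρc : Matrix (D2 d) (D2 d) ℂ)

/-- Marginal of ρ_BTN on A₁ (second factor of ρ_b = ρ^{C₂A₁}). -/
def margA1 : Matrix (Fin d) (Fin d) ℂ := ptrace₁ ρb
/-- Marginal on C₂. -/
def margC2 : Matrix (Fin d) (Fin d) ℂ := ptrace₂ ρb
/-- Marginal on A₂ (first factor of ρ_c = ρ^{A₂B₁}). -/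
def margA2 : Matrix (Fin d) (Fin d) ℂ := ptrace₂ ρc
/-- Marginal on B₁. -/
def margB1 : Matrix (Fin d) (Fin d) ℂ := ptrace₁ ρc
/-- Marginal on B₂ (first factor of ρ_a = ρ^{B₂C₁}). -/
def margB2 : Matrix (Fin d) (Fin d) ℂ := ptrace₂ ρa
/-- Marginal on C₁. -/
def margC1 : Matrix (Fin d) (Fin d) ℂ := ptrace₁ ρa

/-- Reduced observable A^(2) = tr_{A₁}(A (ρ^{A₁} ⊗ 1)). -/
def redA2 (M : Matrix (D2 d) (D2 d) ℂ) : Matrix (Fin d) (Fin d) ℂ :=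
  ptrace₁ (M * (margA1 ρb ⊗ₖ (1 : Matrix (Fin d) (Fin d) ℂ)))
/-- Reduced observable A^(1) = tr_{A₂}(A (1 ⊗ ρ^{A₂})). -/
def redA1 (M : Matrix (D2 d) (D2 d) ℂ) : Matrix (Fin d) (Fin d) ℂ :=
  ptrace₂ (M * ((1 : Matrix (Fin d) (Fin d) ℂ) ⊗ₖ margA2 ρc))
/-- Reduced observable B^(1) = tr_{B₂}(B (1 ⊗ ρ^{B₂})). -/
def redB1 (M : Matrix (D2 d) (D2 d) ℂ) : Matrix (Fin d) (Fin d) ℂ :=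
  ptrace₂ (M * ((1 : Matrix (Fin d) (Fin d) ℂ) ⊗ₖ margB2 ρa))
/-- Reduced observable B^(2) = tr_{B₁}(B (ρ^{B₁} ⊗ 1)). -/
def redB2 (M : Matrix (D2 d) (D2 d) ℂ) : Matrix (Fin d) (Fin d) ℂ :=
  ptrace₁ (M * (margB1 ρc ⊗ₖ (1 : Matrix (Fin d) (Fin d) ℂ)))
/-- Reduced observable C^(1) = tr_{C₂}(C (1 ⊗ ρ^{C₂})); here C acts on C₁C₂. -/
def redC1 (M : Matrix (D2 d) (D2 d) ℂ) : Matrix (Fin d) (Fin d) ℂ :=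
  ptrace₂ (M * ((1 : Matrix (Fin d) (Fin d) ℂ) ⊗ₖ margC2 ρb))
/-- Reduced observable C^(2) = tr_{C₁}(C (ρ^{C₁} ⊗ 1)). -/
def redC2 (M : Matrix (D2 d) (D2 d) ℂ) : Matrix (Fin d) (Fin d) ℂ :=
  ptrace₁ (M * (margC1 ρa ⊗ₖ (1 : Matrix (Fin d) (Fin d) ℂ)))

end marginals


/-- The global Kraus operator `K_A ⊗ K_B ⊗ K_C`, mapping the six-factor
triangle-network space (ordered C₂, A₁, A₂, B₁, B₂, C₁) to the output space
of the three parties. -/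
def globalKraus {d nA nB nC : ℕ}
    (KA : Matrix (Fin nA) (D2 d) ℂ) (KB : Matrix (Fin nB) (D2 d) ℂ)
    (KC : Matrix (Fin nC) (D2 d) ℂ) :
    Matrix (Fin nA × Fin nB × Fin nC) (TriIdx d) ℂ :=
  Matrix.of fun o i =>
    KA o.1 (i.1.2, i.2.1.1) * KB o.2.1 (i.2.1.2, i.2.2.1) * KC o.2.2 (i.2.2.2, i.1.1)

/-- The triangle network state with local channels,
`(E_A ⊗ E_B ⊗ E_C)(ρ_BTN)`, with the channels given by Kraus operators. -/
def ctnState {d nA nB nC LA LB LC : ℕ}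
    (ρa ρb ρc : Matrix (D2 d) (D2 d) ℂ)
    (KA : Fin LA → Matrix (Fin nA) (D2 d) ℂ)
    (KB : Fin LB → Matrix (Fin nB) (D2 d) ℂ)
    (KC : Fin LC → Matrix (Fin nC) (D2 d) ℂ) :
    Matrix (Fin nA × Fin nB × Fin nC) (Fin nA × Fin nB × Fin nC) ℂ :=
  ∑ l, ∑ m, ∑ n,
    globalKraus (KA l) (KB m) (KC n) * btnState ρa ρb ρc *
      (globalKraus (KA l) (KB m) (KC n))ᴴ

/-- Embed an observable of Alice into the tripartite output space. -/
def outA {nA nB nC : ℕ} (M : Matrix (Fin nA) (Fin nA) ℂ) :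
    Matrix (Fin nA × Fin nB × Fin nC) (Fin nA × Fin nB × Fin nC) ℂ :=
  M ⊗ₖ (1 : Matrix (Fin nB × Fin nC) (Fin nB × Fin nC) ℂ)

/-- Embed an observable of Bob into the tripartite output space. -/
def outB {nA nB nC : ℕ} (M : Matrix (Fin nB) (Fin nB) ℂ) :
    Matrix (Fin nA × Fin nB × Fin nC) (Fin nA × Fin nB × Fin nC) ℂ :=
  Matrix.of fun p q => if p.1 = q.1 ∧ p.2.2 = q.2.2 then M p.2.1 q.2.1 else 0

/-- Embed an observable of Charlie into the tripartite output space. -/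
def outC {nA nB nC : ℕ} (M : Matrix (Fin nC) (Fin nC) ℂ) :
    Matrix (Fin nA × Fin nB × Fin nC) (Fin nA × Fin nB × Fin nC) ℂ :=
  (1 : Matrix (Fin nA) (Fin nA) ℂ) ⊗ₖ ((1 : Matrix (Fin nB) (Fin nB) ℂ) ⊗ₖ M)

/-!
Pull the local channels back to the observables (Heisenberg picture) and call an observable of a
party *sliced* when one of its two incoming subsystems has been averaged out. Two inequalities
bound the covariance of a party's own observables from below: the dual of a channel decreases
covariance matrices, and in a product state covariance dominates the sum of the covariances of the
two slices, because the interaction term of the Hoeffding decomposition is orthogonal to both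
slices. Their combined defect is a positive semidefinite residual, one for each party.

Two parties share exactly one source, so their joint moments are moments of their slices in the
state of that source. Hence the covariance matrix is the sum, over the three sources, of the
covariance of the slices in that source, plus the three residuals. Cyclically assigning one
residual to each source gives the decomposition: each summand is positive semidefinite and vanishes
on the party its source does not reach. All observables are padded by zero to a common index type,
so polarization reduces everything to pairs of parties and the cyclic symmetry of the triangle to
one pair.
-/

section Kronecker

variable {l m n p : Type*}

theorem kronecker_induction {R : Type*} [Semiring R] [Finite l] [Finite m] [Finite n] [Finite p]
    {P : Matrix (l × n) (m × p) R → Prop} (X : Matrix (l × n) (m × p) R) (zero : P 0)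
    (add : ∀ X Y, P X → P Y → P (X + Y)) (kronecker : ∀ x y, P (x ⊗ₖ y)) : P X := by
  classical
  refine Matrix.induction_on' X zero add fun i j c => ?_
  simpa only [single_kronecker_single, mul_one] using
    kronecker (single i.1 j.1 c) (single i.2 j.2 (1 : R))

variable [Fintype m] [Fintype n]

theorem trace_one_kronecker_mul [DecidableEq m] (u : Matrix n n ℂ)
    (ρ : Matrix (m × n) (m × n) ℂ) :
    (((1 : Matrix m m ℂ) ⊗ₖ u) * ρ).trace = (u * ptrace₁ ρ).trace := by
  simp only [trace, diag_apply, mul_apply, kroneckerMap_apply, one_apply, ptrace₁, of_apply,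
    Fintype.sum_prod_type, Finset.mul_sum, ite_mul, one_mul, zero_mul, Finset.sum_ite_irrel,
    Finset.sum_const_zero, Finset.sum_ite_eq, Finset.mem_univ, if_true]
  rw [Finset.sum_comm]
  exact Finset.sum_congr rfl fun _ _ => Finset.sum_comm

theorem trace_kronecker_one_mul [DecidableEq n] (u : Matrix m m ℂ)
    (ρ : Matrix (m × n) (m × n) ℂ) :
    ((u ⊗ₖ (1 : Matrix n n ℂ)) * ρ).trace = (u * ptrace₂ ρ).trace := by
  simp only [trace, diag_apply, mul_apply, kroneckerMap_apply, one_apply, ptrace₂, of_apply,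
    Fintype.sum_prod_type, Finset.mul_sum, mul_ite, ite_mul, mul_one, mul_zero, zero_mul,
    Finset.sum_ite_eq, Finset.mem_univ, if_true]
  exact Finset.sum_congr rfl fun _ _ => Finset.sum_comm

theorem IsDensity.ptrace₁ {ρ : Matrix (m × n) (m × n) ℂ} (hρ : IsDensity ρ) :
    IsDensity (ptrace₁ ρ) := by
  have sum_blocks : _root_.ptrace₁ ρ = ∑ k, ρ.submatrix (Prod.mk k) (Prod.mk k) := by
    ext i j
    simp only [_root_.ptrace₁, of_apply, Matrix.sum_apply, submatrix_apply]
  refine ⟨sum_blocks ▸ posSemidef_sum _ fun k _ => hρ.1.submatrix _, ?_⟩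
  rw [← hρ.2]
  simp only [trace, diag_apply, _root_.ptrace₁, of_apply, Fintype.sum_prod_type_right]

theorem IsDensity.ptrace₂ {ρ : Matrix (m × n) (m × n) ℂ} (hρ : IsDensity ρ) :
    IsDensity (ptrace₂ ρ) := by
  have sum_blocks : _root_.ptrace₂ ρ = ∑ k, ρ.submatrix (·, k) (·, k) := by
    ext i j
    simp only [_root_.ptrace₂, of_apply, Matrix.sum_apply, submatrix_apply]
  refine ⟨sum_blocks ▸ posSemidef_sum _ fun k _ => hρ.1.submatrix _, ?_⟩
  rw [← hρ.2]
  simp only [trace, diag_apply, _root_.ptrace₂, of_apply, Fintype.sum_prod_type]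

end Kronecker

section Covariance

variable {m n p ι : Type*} [Fintype n]

theorem posSemidef_trace_conjTranspose_mul_mul [Fintype p] (D : ι → Matrix p n ℂ) {ρ : Matrix n n ℂ}
    (hρ : ρ.PosSemidef) :
    (Matrix.of fun i j => ((D i)ᴴ * D j * ρ).trace).PosSemidef := by
  refine ⟨?_, fun x => ?_⟩
  · ext i j
    rw [conjTranspose_apply, of_apply, of_apply, ← trace_conjTranspose, conjTranspose_mul,
      conjTranspose_mul, conjTranspose_conjTranspose, hρ.isHermitian.eq, trace_mul_comm]
  · have quadratic_form : (x.sum fun i xi => x.sum fun j xj =>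
        star xi * (Matrix.of fun i j => ((D i)ᴴ * D j * ρ).trace) i j * xj)
        = ((x.sum fun j xj => xj • D j) * ρ * (x.sum fun i xi => xi • D i)ᴴ).trace := by
      rw [trace_mul_comm, ← Matrix.mul_assoc]
      simp only [Finsupp.sum, of_apply, conjTranspose_sum, conjTranspose_smul, Matrix.sum_mul,
        Matrix.mul_sum, Matrix.smul_mul, Matrix.mul_smul, trace_sum, trace_smul, smul_eq_mul,
        Finset.mul_sum]
      rw [Finset.sum_comm]
      exact Finset.sum_congr rfl fun i _ => Finset.sum_congr rfl fun j _ => by ring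
    rw [quadratic_form]
    exact (hρ.mul_mul_conjTranspose_same _).trace_nonneg

theorem star_trace_mul_of_isHermitian {M ρ : Matrix n n ℂ} (hM : M.IsHermitian)
    (hρ : ρ.IsHermitian) : star (M * ρ).trace = (M * ρ).trace := by
  rw [← trace_conjTranspose, conjTranspose_mul, hM.eq, hρ.eq, trace_mul_comm]

theorem covMat_posSemidef {M : ι → Matrix n n ℂ} (hM : ∀ i, (M i).IsHermitian)
    {ρ : Matrix n n ℂ} (hρ : IsDensity ρ) : (covMat M ρ).PosSemidef := by
  classical
  convert posSemidef_trace_conjTranspose_mul_mul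
    (fun i => M i - (M i * ρ).trace • (1 : Matrix n n ℂ)) hρ.1 using 1
  ext i j
  simp only [covMat, of_apply, conjTranspose_sub, conjTranspose_smul, conjTranspose_one,
    (hM i).eq, star_trace_mul_of_isHermitian (hM i) hρ.1.isHermitian, Matrix.sub_mul,
    Matrix.mul_sub, trace_sub, Matrix.smul_mul, Matrix.mul_smul, trace_smul, Matrix.one_mul,
    Matrix.mul_one, hρ.2, smul_eq_mul]
  ring

theorem trace_submatrix_equiv [Fintype m] (e : m ≃ n) (M : Matrix n n ℂ) :
    (M.submatrix e e).trace = M.trace :=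
  e.sum_comp fun i => M i i

theorem covMat_submatrix_equiv [Fintype m] (e : m ≃ n) (M : ι → Matrix n n ℂ) (ρ : Matrix n n ℂ) :
    covMat (fun i => (M i).submatrix e e) (ρ.submatrix e e) = covMat M ρ := by
  simp only [covMat, submatrix_mul_equiv, trace_submatrix_equiv]

theorem covMat_apply_eq_zero_of_left {M : ι → Matrix n n ℂ} {i : ι} (hi : M i = 0)
    (ρ : Matrix n n ℂ) (j : ι) : covMat M ρ i j = 0 := by
  simp only [covMat, of_apply, hi, trace_zero, zero_mul, sub_zero]

theorem covMat_add_add (L M N : ι → Matrix n n ℂ) (ρ : Matrix n n ℂ) :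
    covMat (fun i => L i + M i + N i) ρ
      = covMat (fun i => L i + M i) ρ + covMat (fun i => M i + N i) ρ
        + covMat (fun i => L i + N i) ρ - (covMat L ρ + covMat M ρ + covMat N ρ) := by
  ext i j
  simp only [covMat, of_apply, Matrix.add_apply, Matrix.sub_apply, Matrix.add_mul,
    Matrix.mul_add, trace_add]
  ring

theorem covMat_congr [Fintype m] {M : ι → Matrix n n ℂ} {M' : ι → Matrix m m ℂ}
    {ρ : Matrix n n ℂ} {ρ' : Matrix m m ℂ} (h : ∀ i, (M i * ρ).trace = (M' i * ρ').trace)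
    (h₂ : ∀ i j, (M i * M j * ρ).trace = (M' i * M' j * ρ').trace) :
    covMat M ρ = covMat M' ρ' := by
  ext i j
  simp only [covMat, of_apply, h, h₂]

theorem covMat_add_sub_congr [Fintype m] {M N : ι → Matrix n n ℂ} {M' N' : ι → Matrix m m ℂ}
    {ρ : Matrix n n ℂ} {ρ' : Matrix m m ℂ} (hM : ∀ i, (M i * ρ).trace = (M' i * ρ').trace)
    (hN : ∀ i, (N i * ρ).trace = (N' i * ρ').trace)
    (hMN : ∀ i j, (M i * N j * ρ).trace = (M' i * N' j * ρ').trace)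
    (hNM : ∀ i j, (N i * M j * ρ).trace = (N' i * M' j * ρ').trace) :
    covMat (fun i => M i + N i) ρ - (covMat M ρ + covMat N ρ)
      = covMat (fun i => M' i + N' i) ρ' - (covMat M' ρ' + covMat N' ρ') := by
  ext i j
  simp only [covMat, of_apply, Matrix.sub_apply, Matrix.add_apply, Matrix.add_mul,
    Matrix.mul_add, trace_add, hM, hN, hMN, hNM]
  ring

theorem covMat_kronecker_one [Fintype m] [DecidableEq n] (X : ι → Matrix m m ℂ)
    (ρ : Matrix (m × n) (m × n) ℂ) :
    covMat (fun i => X i ⊗ₖ (1 : Matrix n n ℂ)) ρ = covMat X (ptrace₂ ρ) :=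
  covMat_congr (fun i => trace_kronecker_one_mul (X i) ρ) fun i j => by
    rw [← mul_kronecker_mul, Matrix.one_mul, trace_kronecker_one_mul]

theorem covMat_one_kronecker [Fintype m] [DecidableEq m] (X : ι → Matrix n n ℂ)
    (ρ : Matrix (m × n) (m × n) ℂ) :
    covMat (fun i => (1 : Matrix m m ℂ) ⊗ₖ X i) ρ = covMat X (ptrace₁ ρ) :=
  covMat_congr (fun i => trace_one_kronecker_mul (X i) ρ) fun i j => by
    rw [← mul_kronecker_mul, Matrix.one_mul, trace_one_kronecker_mul]

end Covariance

section Slices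

variable {m n : Type*} [Fintype m] [Fintype n]

section Left

variable [DecidableEq n]

/-- The slice map `X ↦ tr₁(X (ω ⊗ 1))` averaging the first tensor factor over the state `ω`; it
yields the reduced observables `A^(2)`, `B^(2)`, `C^(2)`. -/
def leftSlice (ω : Matrix m m ℂ) : Matrix (m × n) (m × n) ℂ →ₗ[ℂ] Matrix n n ℂ where
  toFun X := ptrace₁ (X * (ω ⊗ₖ 1))
  map_add' X Y := by
    ext; simp only [ptrace₁, Matrix.add_mul, Matrix.add_apply, of_apply, Finset.sum_add_distrib]
  map_smul' c X := by
    ext; simp only [ptrace₁, Matrix.smul_mul, Matrix.smul_apply, of_apply, Finset.smul_sum,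
      RingHom.id_apply]

theorem leftSlice_kronecker (ω x : Matrix m m ℂ) (y : Matrix n n ℂ) :
    leftSlice ω (x ⊗ₖ y) = (x * ω).trace • y := by
  ext i j
  simp only [leftSlice, LinearMap.coe_mk, AddHom.coe_mk, ptrace₁, ← mul_kronecker_mul,
    Matrix.mul_one, of_apply, kroneckerMap_apply, ← Finset.sum_mul, trace, diag_apply,
    Matrix.smul_apply, smul_eq_mul]

theorem leftSlice_one [DecidableEq m] {ω : Matrix m m ℂ} (hω : ω.trace = 1) :
    leftSlice ω (1 : Matrix (m × n) (m × n) ℂ) = 1 := by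
  rw [← one_kronecker_one, leftSlice_kronecker, Matrix.one_mul, hω, one_smul]

theorem leftSlice_isHermitian {ω : Matrix m m ℂ} (hω : ω.IsHermitian)
    {X : Matrix (m × n) (m × n) ℂ} (hX : X.IsHermitian) : (leftSlice ω X).IsHermitian := by
  suffices ∀ X : Matrix (m × n) (m × n) ℂ, (leftSlice ω X)ᴴ = leftSlice ω Xᴴ by
    rw [IsHermitian, this, hX.eq]
  intro X
  induction X using kronecker_induction with
  | zero => simp only [map_zero, conjTranspose_zero]
  | add X Y hX hY => simp only [map_add, conjTranspose_add, hX, hY]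
  | kronecker x y =>
    rw [conjTranspose_kronecker, leftSlice_kronecker, leftSlice_kronecker, conjTranspose_smul,
      ← trace_conjTranspose, conjTranspose_mul, hω.eq, trace_mul_comm]

theorem leftSlice_one_kronecker_mul [DecidableEq m] (ω : Matrix m m ℂ) (u : Matrix n n ℂ)
    (X : Matrix (m × n) (m × n) ℂ) : leftSlice ω ((1 ⊗ₖ u) * X) = u * leftSlice ω X := by
  induction X using kronecker_induction with
  | zero => simp only [Matrix.mul_zero, map_zero]
  | add X Y hX hY => simp only [Matrix.mul_add, map_add, hX, hY]
  | kronecker x y =>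
    rw [← mul_kronecker_mul, leftSlice_kronecker, leftSlice_kronecker, Matrix.one_mul,
      Matrix.mul_smul]

theorem leftSlice_mul_one_kronecker [DecidableEq m] (ω : Matrix m m ℂ)
    (X : Matrix (m × n) (m × n) ℂ) (u : Matrix n n ℂ) :
    leftSlice ω (X * (1 ⊗ₖ u)) = leftSlice ω X * u := by
  induction X using kronecker_induction with
  | zero => simp only [Matrix.zero_mul, map_zero]
  | add X Y hX hY => simp only [Matrix.add_mul, map_add, hX, hY]
  | kronecker x y =>
    rw [← mul_kronecker_mul, leftSlice_kronecker, leftSlice_kronecker, Matrix.mul_one,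
      Matrix.smul_mul]

theorem trace_mul_kronecker_eq_leftSlice (X : Matrix (m × n) (m × n) ℂ) (ω₁ : Matrix m m ℂ)
    (ω₂ : Matrix n n ℂ) : (X * (ω₁ ⊗ₖ ω₂)).trace = (leftSlice ω₁ X * ω₂).trace := by
  induction X using kronecker_induction with
  | zero => simp only [Matrix.zero_mul, map_zero, trace_zero]
  | add X Y hX hY => simp only [Matrix.add_mul, map_add, trace_add, hX, hY]
  | kronecker x y =>
    rw [← mul_kronecker_mul, trace_kronecker, leftSlice_kronecker, Matrix.smul_mul, trace_smul,
      smul_eq_mul]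

end Left

section Right

variable [DecidableEq m]

/-- The slice map `X ↦ tr₂(X (1 ⊗ ω))` averaging the second tensor factor over the state `ω`; it
yields the reduced observables `A^(1)`, `B^(1)`, `C^(1)`. -/
def rightSlice (ω : Matrix n n ℂ) : Matrix (m × n) (m × n) ℂ →ₗ[ℂ] Matrix m m ℂ where
  toFun X := ptrace₂ (X * (1 ⊗ₖ ω))
  map_add' X Y := by
    ext; simp only [ptrace₂, Matrix.add_mul, Matrix.add_apply, of_apply, Finset.sum_add_distrib]
  map_smul' c X := by
    ext; simp only [ptrace₂, Matrix.smul_mul, Matrix.smul_apply, of_apply, Finset.smul_sum,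
      RingHom.id_apply]

theorem rightSlice_kronecker (ω y : Matrix n n ℂ) (x : Matrix m m ℂ) :
    rightSlice ω (x ⊗ₖ y) = (y * ω).trace • x := by
  ext i j
  simp only [rightSlice, LinearMap.coe_mk, AddHom.coe_mk, ptrace₂, ← mul_kronecker_mul,
    Matrix.mul_one, of_apply, kroneckerMap_apply, ← Finset.mul_sum, trace, diag_apply,
    Matrix.smul_apply, smul_eq_mul, mul_comm]

theorem rightSlice_one [DecidableEq n] {ω : Matrix n n ℂ} (hω : ω.trace = 1) :
    rightSlice ω (1 : Matrix (m × n) (m × n) ℂ) = 1 := by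
  rw [← one_kronecker_one, rightSlice_kronecker, Matrix.one_mul, hω, one_smul]

theorem rightSlice_isHermitian {ω : Matrix n n ℂ} (hω : ω.IsHermitian)
    {X : Matrix (m × n) (m × n) ℂ} (hX : X.IsHermitian) : (rightSlice ω X).IsHermitian := by
  suffices ∀ X : Matrix (m × n) (m × n) ℂ, (rightSlice ω X)ᴴ = rightSlice ω Xᴴ by
    rw [IsHermitian, this, hX.eq]
  intro X
  induction X using kronecker_induction with
  | zero => simp only [map_zero, conjTranspose_zero]
  | add X Y hX hY => simp only [map_add, conjTranspose_add, hX, hY]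
  | kronecker x y =>
    rw [conjTranspose_kronecker, rightSlice_kronecker, rightSlice_kronecker, conjTranspose_smul,
      ← trace_conjTranspose, conjTranspose_mul, hω.eq, trace_mul_comm]

theorem rightSlice_kronecker_one_mul [DecidableEq n] (ω : Matrix n n ℂ) (u : Matrix m m ℂ)
    (X : Matrix (m × n) (m × n) ℂ) : rightSlice ω ((u ⊗ₖ 1) * X) = u * rightSlice ω X := by
  induction X using kronecker_induction with
  | zero => simp only [Matrix.mul_zero, map_zero]
  | add X Y hX hY => simp only [Matrix.mul_add, map_add, hX, hY]
  | kronecker x y =>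
    rw [← mul_kronecker_mul, rightSlice_kronecker, rightSlice_kronecker, Matrix.one_mul,
      Matrix.mul_smul]

theorem rightSlice_mul_kronecker_one [DecidableEq n] (ω : Matrix n n ℂ)
    (X : Matrix (m × n) (m × n) ℂ) (u : Matrix m m ℂ) :
    rightSlice ω (X * (u ⊗ₖ 1)) = rightSlice ω X * u := by
  induction X using kronecker_induction with
  | zero => simp only [Matrix.zero_mul, map_zero]
  | add X Y hX hY => simp only [Matrix.add_mul, map_add, hX, hY]
  | kronecker x y =>
    rw [← mul_kronecker_mul, rightSlice_kronecker, rightSlice_kronecker, Matrix.mul_one,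
      Matrix.smul_mul]

theorem trace_mul_kronecker_eq_rightSlice (X : Matrix (m × n) (m × n) ℂ) (ω₁ : Matrix m m ℂ)
    (ω₂ : Matrix n n ℂ) : (X * (ω₁ ⊗ₖ ω₂)).trace = (rightSlice ω₂ X * ω₁).trace := by
  induction X using kronecker_induction with
  | zero => simp only [Matrix.zero_mul, map_zero, trace_zero]
  | add X Y hX hY => simp only [Matrix.add_mul, map_add, trace_add, hX, hY]
  | kronecker x y =>
    rw [← mul_kronecker_mul, trace_kronecker, rightSlice_kronecker, Matrix.smul_mul, trace_smul,
      smul_eq_mul, mul_comm]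

end Right

end Slices

section Superadditivity

variable {m n ι : Type*} [Fintype m] [Fintype n] [DecidableEq m] [DecidableEq n]

/-- The pure-interaction term of the Hoeffding decomposition of `X` with respect to the product
state `ω₁ ⊗ ω₂`. -/
def interactionPart (ω₁ : Matrix m m ℂ) (ω₂ : Matrix n n ℂ) (X : Matrix (m × n) (m × n) ℂ) :
    Matrix (m × n) (m × n) ℂ :=
  X - rightSlice ω₂ X ⊗ₖ 1 - 1 ⊗ₖ leftSlice ω₁ X + (X * (ω₁ ⊗ₖ ω₂)).trace • 1

variable {ω₁ : Matrix m m ℂ} {ω₂ : Matrix n n ℂ}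

theorem rightSlice_interactionPart (h₂ : ω₂.trace = 1) (X : Matrix (m × n) (m × n) ℂ) :
    rightSlice ω₂ (interactionPart ω₁ ω₂ X) = 0 := by
  rw [interactionPart, map_add, map_sub, map_sub, map_smul, rightSlice_one h₂,
    rightSlice_kronecker, rightSlice_kronecker, Matrix.one_mul, h₂, one_smul,
    trace_mul_kronecker_eq_leftSlice]
  abel

theorem leftSlice_interactionPart (h₁ : ω₁.trace = 1) (X : Matrix (m × n) (m × n) ℂ) :
    leftSlice ω₁ (interactionPart ω₁ ω₂ X) = 0 := by
  rw [interactionPart, map_add, map_sub, map_sub, map_smul, leftSlice_one h₁,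
    leftSlice_kronecker, leftSlice_kronecker, Matrix.one_mul, h₁, one_smul,
    trace_mul_kronecker_eq_rightSlice]
  abel

theorem interactionPart_isHermitian (h₁ : ω₁.IsHermitian) (h₂ : ω₂.IsHermitian)
    {X : Matrix (m × n) (m × n) ℂ} (hX : X.IsHermitian) :
    (interactionPart ω₁ ω₂ X).IsHermitian := by
  have h₁₂ : (ω₁ ⊗ₖ ω₂).IsHermitian := by rw [IsHermitian, conjTranspose_kronecker, h₁.eq, h₂.eq]
  rw [IsHermitian, interactionPart, conjTranspose_add, conjTranspose_sub, conjTranspose_sub,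
    conjTranspose_kronecker, conjTranspose_kronecker, conjTranspose_smul, conjTranspose_one,
    conjTranspose_one, conjTranspose_one, star_trace_mul_of_isHermitian hX h₁₂, hX.eq,
    (rightSlice_isHermitian h₂ hX).eq, (leftSlice_isHermitian h₁ hX).eq]

theorem trace_interactionPart_mul_interactionPart (h₁ : ω₁.trace = 1) (h₂ : ω₂.trace = 1)
    (X Y : Matrix (m × n) (m × n) ℂ) :
    (interactionPart ω₁ ω₂ X * interactionPart ω₁ ω₂ Y * (ω₁ ⊗ₖ ω₂)).trace
      = (X * Y * (ω₁ ⊗ₖ ω₂)).trace - (rightSlice ω₂ X * rightSlice ω₂ Y * ω₁).trace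
        - (leftSlice ω₁ X * leftSlice ω₁ Y * ω₂).trace
        + (X * (ω₁ ⊗ₖ ω₂)).trace * (Y * (ω₁ ⊗ₖ ω₂)).trace := by
  have orthogonal : (interactionPart ω₁ ω₂ X * interactionPart ω₁ ω₂ Y * (ω₁ ⊗ₖ ω₂)).trace
      = (interactionPart ω₁ ω₂ X * Y * (ω₁ ⊗ₖ ω₂)).trace := by
    conv_lhs => rw [interactionPart.eq_def ω₁ ω₂ Y]
    have h_left : (interactionPart ω₁ ω₂ X * (1 ⊗ₖ leftSlice ω₁ Y) * (ω₁ ⊗ₖ ω₂)).trace = 0 := by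
      rw [trace_mul_kronecker_eq_leftSlice, leftSlice_mul_one_kronecker,
        leftSlice_interactionPart h₁, Matrix.zero_mul, Matrix.zero_mul, trace_zero]
    have h_right : (interactionPart ω₁ ω₂ X * (rightSlice ω₂ Y ⊗ₖ 1) * (ω₁ ⊗ₖ ω₂)).trace = 0 := by
      rw [trace_mul_kronecker_eq_rightSlice, rightSlice_mul_kronecker_one,
        rightSlice_interactionPart h₂, Matrix.zero_mul, Matrix.zero_mul, trace_zero]
    have h_one : (interactionPart ω₁ ω₂ X * (ω₁ ⊗ₖ ω₂)).trace = 0 := by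
      rw [trace_mul_kronecker_eq_leftSlice, leftSlice_interactionPart h₁, Matrix.zero_mul,
        trace_zero]
    simp only [Matrix.mul_add, Matrix.mul_sub, Matrix.add_mul, Matrix.sub_mul, trace_add,
      trace_sub, h_left, h_right, Matrix.mul_smul, Matrix.smul_mul, Matrix.mul_one, trace_smul,
      h_one, smul_zero, sub_zero, add_zero]
  rw [orthogonal, interactionPart]
  simp only [Matrix.add_mul, Matrix.sub_mul, trace_add, trace_sub, Matrix.smul_mul,
    Matrix.one_mul, trace_smul, smul_eq_mul]
  rw [trace_mul_kronecker_eq_rightSlice ((rightSlice ω₂ X ⊗ₖ 1) * Y),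
    trace_mul_kronecker_eq_leftSlice ((1 ⊗ₖ leftSlice ω₁ X) * Y), rightSlice_kronecker_one_mul,
    leftSlice_one_kronecker_mul]

theorem covMat_kronecker_sub_covMat_slices_posSemidef {X : ι → Matrix (m × n) (m × n) ℂ}
    (hX : ∀ i, (X i).IsHermitian) (h₁ : IsDensity ω₁) (h₂ : IsDensity ω₂) :
    (covMat X (ω₁ ⊗ₖ ω₂) - covMat (fun i => rightSlice ω₂ (X i)) ω₁
      - covMat (fun i => leftSlice ω₁ (X i)) ω₂).PosSemidef := by
  convert posSemidef_trace_conjTranspose_mul_mul (fun i => interactionPart ω₁ ω₂ (X i))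
    (h₁.1.kronecker h₂.1) using 1
  ext i j
  rw [of_apply, (interactionPart_isHermitian h₁.1.isHermitian h₂.1.isHermitian (hX i)).eq,
    trace_interactionPart_mul_interactionPart h₁.2 h₂.2]
  simp only [covMat, Matrix.sub_apply, of_apply, ← trace_mul_kronecker_eq_rightSlice _ ω₁ ω₂,
    ← trace_mul_kronecker_eq_leftSlice _ ω₁ ω₂]
  ring

end Superadditivity

section Channels

variable {m n p l l' ι : Type*} [Fintype l]

/-- The completely positive map `ρ ↦ ∑ K_l ρ K_l†`; it is a quantum channel when
`∑ K_l† K_l = 1`. -/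
def krausMap [Fintype m] (K : l → Matrix n m ℂ) (ρ : Matrix m m ℂ) : Matrix n n ℂ :=
  ∑ t, K t * ρ * (K t)ᴴ

theorem krausMap_submatrix_equiv {m' n' : Type*} [Fintype m] [Fintype m'] [Fintype l']
    (K : l → Matrix n m ℂ) (ρ : Matrix m m ℂ) (g : l' ≃ l) (e : n' → n) (f : m' ≃ m) :
    (krausMap K ρ).submatrix e e
      = krausMap (fun t => (K (g t)).submatrix e f) (ρ.submatrix f f) := by
  have conj_submatrix : ∀ t, (K t * ρ * (K t)ᴴ).submatrix e e
      = (K t).submatrix e f * ρ.submatrix f f * ((K t).submatrix e f)ᴴ := fun t => by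
    rw [conjTranspose_submatrix, submatrix_mul_equiv, submatrix_mul_equiv]
  rw [krausMap, krausMap, g.sum_comp fun t => (K t).submatrix e f * ρ.submatrix f f
    * ((K t).submatrix e f)ᴴ, ← Finset.sum_congr rfl fun t _ => conj_submatrix t]
  ext i j
  simp only [submatrix_apply, Matrix.sum_apply]

variable [Fintype n]

/-- The Heisenberg-picture dual `M ↦ ∑ K_l† M K_l` of `krausMap K`. -/
def krausDual (K : l → Matrix n m ℂ) (M : Matrix n n ℂ) : Matrix m m ℂ :=
  ∑ t, (K t)ᴴ * M * K t

theorem trace_mul_krausMap [Fintype m] (K : l → Matrix n m ℂ) (M : Matrix n n ℂ)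
    (ρ : Matrix m m ℂ) :
    (M * krausMap K ρ).trace = (krausDual K M * ρ).trace := by
  simp only [krausMap, krausDual, Matrix.mul_sum, Matrix.sum_mul, trace_sum]
  refine Finset.sum_congr rfl fun t _ => ?_
  rw [← Matrix.mul_assoc, trace_mul_comm]
  simp only [Matrix.mul_assoc]

theorem krausDual_one [DecidableEq m] [DecidableEq n] {K : l → Matrix n m ℂ}
    (hK : ∑ t, (K t)ᴴ * K t = 1) : krausDual K 1 = 1 := by
  simp only [krausDual, Matrix.mul_one, hK]

theorem krausDual_zero (K : l → Matrix n m ℂ) : krausDual K 0 = 0 := by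
  simp only [krausDual, Matrix.mul_zero, Matrix.zero_mul, Finset.sum_const_zero]

theorem krausDual_isHermitian (K : l → Matrix n m ℂ) {M : Matrix n n ℂ} (hM : M.IsHermitian) :
    (krausDual K M).IsHermitian := by
  simp only [IsHermitian, krausDual, conjTranspose_sum, conjTranspose_mul,
    conjTranspose_conjTranspose, hM.eq, Matrix.mul_assoc]

theorem sum_conjTranspose_intertwiner_mul_intertwiner [Fintype m] [DecidableEq m]
    {K : l → Matrix n m ℂ} (hK : ∑ t, (K t)ᴴ * K t = 1) {M : Matrix n n ℂ}
    (hM : M.IsHermitian) (N : Matrix n n ℂ) :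
    ∑ t, (M * K t - K t * krausDual K M)ᴴ * (N * K t - K t * krausDual K N)
      = krausDual K (M * N) - krausDual K M * krausDual K N := by
  have expand : ∀ t, (M * K t - K t * krausDual K M)ᴴ * (N * K t - K t * krausDual K N)
      = (K t)ᴴ * (M * N) * K t - (K t)ᴴ * M * K t * krausDual K N
        - krausDual K M * ((K t)ᴴ * N * K t)
        + krausDual K M * ((K t)ᴴ * K t) * krausDual K N := fun t => by
    rw [conjTranspose_sub, conjTranspose_mul, conjTranspose_mul, hM.eq,
      (krausDual_isHermitian K hM).eq]
    simp only [Matrix.sub_mul, Matrix.mul_sub, Matrix.mul_assoc]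
    abel
  simp only [expand, Finset.sum_add_distrib, Finset.sum_sub_distrib, ← Matrix.sum_mul,
    ← Matrix.mul_sum, hK]
  simp only [← krausDual.eq_def, Matrix.mul_one]
  abel

theorem covMat_krausMap_sub_covMat_krausDual_posSemidef [Fintype m] [DecidableEq m]
    {K : l → Matrix n m ℂ} (hK : ∑ t, (K t)ᴴ * K t = 1) {A : ι → Matrix n n ℂ}
    (hA : ∀ i, (A i).IsHermitian) {ρ : Matrix m m ℂ} (hρ : ρ.PosSemidef) :
    (covMat A (krausMap K ρ) - covMat (fun i => krausDual K (A i)) ρ).PosSemidef := by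
  convert posSemidef_sum Finset.univ fun t _ => posSemidef_trace_conjTranspose_mul_mul
    (fun i => A i * K t - K t * krausDual K (A i)) hρ using 1
  ext i j
  rw [Matrix.sum_apply]
  simp only [of_apply, ← trace_sum, ← Matrix.sum_mul,
    sum_conjTranspose_intertwiner_mul_intertwiner hK (hA i) (A j), Matrix.sub_apply, covMat,
    trace_mul_krausMap, Matrix.sub_mul, trace_sub]
  ring

/-- The Kraus family of the product channel. -/
def krausProd {n' m' : Type*} (K : l → Matrix n m ℂ) (K' : l' → Matrix n' m' ℂ) :
    l × l' → Matrix (n × n') (m × m') ℂ :=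
  fun t => K t.1 ⊗ₖ K' t.2

theorem krausDual_krausProd_kronecker {n' m' : Type*} [Fintype n'] [Fintype l']
    (K : l → Matrix n m ℂ) (K' : l' → Matrix n' m' ℂ) (M : Matrix n n ℂ) (M' : Matrix n' n' ℂ) :
    krausDual (krausProd K K') (M ⊗ₖ M') = krausDual K M ⊗ₖ krausDual K' M' := by
  ext i j
  simp only [krausDual, krausProd, conjTranspose_kronecker, ← mul_kronecker_mul,
    Matrix.sum_apply, kroneckerMap_apply, Fintype.sum_prod_type, Finset.sum_mul_sum]

end Channels

section PartyResidual

variable {a₁ a₂ n l ι : Type*} [Fintype a₁] [Fintype a₂] [Fintype n] [Fintype l]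
  [DecidableEq a₁] [DecidableEq a₂]

/-- The covariance of a party's observables in its local output state that is not accounted for by
the two sources feeding the party, in the states `ω₁` and `ω₂`. -/
def partyResidual (K : l → Matrix n (a₁ × a₂) ℂ) (ω₁ : Matrix a₁ a₁ ℂ) (ω₂ : Matrix a₂ a₂ ℂ)
    (A : ι → Matrix n n ℂ) : Matrix ι ι ℂ :=
  covMat A (krausMap K (ω₁ ⊗ₖ ω₂)) - covMat (fun i => rightSlice ω₂ (krausDual K (A i))) ω₁
    - covMat (fun i => leftSlice ω₁ (krausDual K (A i))) ω₂

theorem partyResidual_posSemidef {K : l → Matrix n (a₁ × a₂) ℂ} (hK : ∑ t, (K t)ᴴ * K t = 1)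
    {ω₁ : Matrix a₁ a₁ ℂ} {ω₂ : Matrix a₂ a₂ ℂ} (h₁ : IsDensity ω₁) (h₂ : IsDensity ω₂)
    {A : ι → Matrix n n ℂ} (hA : ∀ i, (A i).IsHermitian) :
    (partyResidual K ω₁ ω₂ A).PosSemidef := by
  convert (covMat_krausMap_sub_covMat_krausDual_posSemidef hK hA (h₁.1.kronecker h₂.1)).add
    (covMat_kronecker_sub_covMat_slices_posSemidef
      (fun i => krausDual_isHermitian K (hA i)) h₁ h₂) using 1
  rw [partyResidual]
  abel

end PartyResidual

section LinkMatrix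

variable {a₁ a₂ b₁ b₂ c₁ c₂ nA nB lA lB ι : Type*}
  [Fintype a₁] [Fintype a₂] [Fintype b₁] [Fintype b₂] [Fintype c₁] [Fintype c₂]
  [Fintype nA] [Fintype nB] [Fintype lA] [Fintype lB]
  [DecidableEq a₁] [DecidableEq a₂] [DecidableEq b₁]
  {ρa : Matrix (b₂ × c₁) (b₂ × c₁) ℂ} {ρb : Matrix (c₂ × a₁) (c₂ × a₁) ℂ}
  {ρc : Matrix (a₂ × b₁) (a₂ × b₁) ℂ} {KA : lA → Matrix nA (a₁ × a₂) ℂ}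
  {KB : lB → Matrix nB (b₁ × b₂) ℂ}

/-- The part of the network covariance carried by the source `ρc` linking the first two parties:
the covariance, in `ρc`, of their observables reduced to `A₂` and `B₁`, plus the residual of the
first party. The index type is shared, so a party without an observable at an index has `0`
there. -/
def linkMatrix (KA : lA → Matrix nA (a₁ × a₂) ℂ) (KB : lB → Matrix nB (b₁ × b₂) ℂ)
    (ρa : Matrix (b₂ × c₁) (b₂ × c₁) ℂ) (ρb : Matrix (c₂ × a₁) (c₂ × a₁) ℂ)
    (ρc : Matrix (a₂ × b₁) (a₂ × b₁) ℂ) (A : ι → Matrix nA nA ℂ) (B : ι → Matrix nB nB ℂ) :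
    Matrix ι ι ℂ :=
  covMat (fun p => leftSlice (ptrace₁ ρb) (krausDual KA (A p)) ⊗ₖ 1
      + 1 ⊗ₖ rightSlice (ptrace₂ ρa) (krausDual KB (B p))) ρc
    + partyResidual KA (ptrace₁ ρb) (ptrace₂ ρc) A

theorem linkMatrix_posSemidef (hKA : ∑ t, (KA t)ᴴ * KA t = 1) (hρa : IsDensity ρa)
    (hρb : IsDensity ρb) (hρc : IsDensity ρc) {A : ι → Matrix nA nA ℂ} {B : ι → Matrix nB nB ℂ}
    (hA : ∀ p, (A p).IsHermitian) (hB : ∀ p, (B p).IsHermitian) :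
    (linkMatrix KA KB ρa ρb ρc A B).PosSemidef := by
  refine (covMat_posSemidef (fun p => ?_) hρc).add
    (partyResidual_posSemidef hKA hρb.ptrace₁ hρc.ptrace₂ hA)
  rw [IsHermitian, conjTranspose_add, conjTranspose_kronecker, conjTranspose_kronecker,
    conjTranspose_one, conjTranspose_one,
    (leftSlice_isHermitian hρb.ptrace₁.1.isHermitian (krausDual_isHermitian KA (hA p))).eq,
    (rightSlice_isHermitian hρa.ptrace₂.1.isHermitian (krausDual_isHermitian KB (hB p))).eq]

theorem linkMatrix_apply_eq_zero_of_left {A : ι → Matrix nA nA ℂ} {B : ι → Matrix nB nB ℂ} {p : ι}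
    (hAp : A p = 0) (hBp : B p = 0) (q : ι) : linkMatrix KA KB ρa ρb ρc A B p q = 0 := by
  have h_left : leftSlice (ptrace₁ ρb) (krausDual KA (A p)) = 0 := by
    rw [hAp, krausDual_zero, map_zero]
  have h_right : rightSlice (ptrace₂ ρc) (krausDual KA (A p)) = 0 := by
    rw [hAp, krausDual_zero, map_zero]
  have h_reduced : leftSlice (ptrace₁ ρb) (krausDual KA (A p)) ⊗ₖ (1 : Matrix b₁ b₁ ℂ)
      + (1 : Matrix a₂ a₂ ℂ) ⊗ₖ rightSlice (ptrace₂ ρa) (krausDual KB (B p)) = 0 := by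
    rw [h_left, hBp, krausDual_zero, map_zero, zero_kronecker, kronecker_zero, add_zero]
  rw [linkMatrix, partyResidual, Matrix.add_apply, Matrix.sub_apply, Matrix.sub_apply,
    covMat_apply_eq_zero_of_left hAp,
    covMat_apply_eq_zero_of_left (M := fun p => leftSlice _ (krausDual KA (A p))) h_left,
    covMat_apply_eq_zero_of_left (M := fun p => rightSlice _ (krausDual KA (A p))) h_right,
    covMat_apply_eq_zero_of_left (M := fun p => leftSlice _ (krausDual KA (A p)) ⊗ₖ 1
      + 1 ⊗ₖ rightSlice _ (krausDual KB (B p))) h_reduced, sub_zero, sub_zero, add_zero]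

end LinkMatrix

section Triangle

variable {a₁ a₂ b₁ b₂ c₁ c₂ : Type*}

/-- Regroups the six subsystems from parties, `A₁A₂|B₁B₂|C₁C₂`, to sources,
`C₂A₁|A₂B₁|B₂C₁`. -/
def partiesEquivSources :
    (a₁ × a₂) × (b₁ × b₂) × (c₁ × c₂) ≃ (c₂ × a₁) × (a₂ × b₁) × (b₂ × c₁) where
  toFun p := ((p.2.2.2, p.1.1), (p.1.2, p.2.1.1), (p.2.1.2, p.2.2.1))
  invFun q := ((q.1.2, q.2.1.1), (q.2.1.2, q.2.2.1), (q.2.2.2, q.1.1))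

/-- The basic triangle network state, with the subsystems ordered by party rather than by source
as in `btnState`. -/
def triangleState (ρa : Matrix (b₂ × c₁) (b₂ × c₁) ℂ) (ρb : Matrix (c₂ × a₁) (c₂ × a₁) ℂ)
    (ρc : Matrix (a₂ × b₁) (a₂ × b₁) ℂ) :
    Matrix ((a₁ × a₂) × (b₁ × b₂) × (c₁ × c₂)) ((a₁ × a₂) × (b₁ × b₂) × (c₁ × c₂)) ℂ :=
  (ρb ⊗ₖ (ρc ⊗ₖ ρa)).submatrix partiesEquivSources partiesEquivSources

variable [Fintype a₁] [Fintype a₂] [Fintype b₁] [Fintype b₂] [Fintype c₁] [Fintype c₂]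
  (ρa : Matrix (b₂ × c₁) (b₂ × c₁) ℂ) (ρb : Matrix (c₂ × a₁) (c₂ × a₁) ℂ)
  (ρc : Matrix (a₂ × b₁) (a₂ × b₁) ℂ)

theorem trace_kronecker_kronecker_mul_triangleState (x₁ : Matrix a₁ a₁ ℂ) (x₂ : Matrix a₂ a₂ ℂ)
    (y₁ : Matrix b₁ b₁ ℂ) (y₂ : Matrix b₂ b₂ ℂ) (z₁ : Matrix c₁ c₁ ℂ) (z₂ : Matrix c₂ c₂ ℂ) :
    (((x₁ ⊗ₖ x₂) ⊗ₖ ((y₁ ⊗ₖ y₂) ⊗ₖ (z₁ ⊗ₖ z₂))) * triangleState ρa ρb ρc).trace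
      = ((z₂ ⊗ₖ x₁) * ρb).trace * ((x₂ ⊗ₖ y₁) * ρc).trace * ((y₂ ⊗ₖ z₁) * ρa).trace := by
  have regroup : (x₁ ⊗ₖ x₂) ⊗ₖ ((y₁ ⊗ₖ y₂) ⊗ₖ (z₁ ⊗ₖ z₂))
      = ((z₂ ⊗ₖ x₁) ⊗ₖ ((x₂ ⊗ₖ y₁) ⊗ₖ (y₂ ⊗ₖ z₁))).submatrix partiesEquivSources
          partiesEquivSources := by
    ext i j
    simp only [kroneckerMap_apply, submatrix_apply, partiesEquivSources, Equiv.coe_fn_mk]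
    ring
  rw [regroup, triangleState, submatrix_mul_equiv, trace_submatrix_equiv, ← mul_kronecker_mul,
    ← mul_kronecker_mul, trace_kronecker, trace_kronecker, mul_assoc]

variable [DecidableEq a₂] [DecidableEq b₁] [DecidableEq c₁] [DecidableEq c₂]

theorem trace_kronecker_kronecker_one_mul_triangleState (X : Matrix (a₁ × a₂) (a₁ × a₂) ℂ)
    (Y : Matrix (b₁ × b₂) (b₁ × b₂) ℂ) :
    ((X ⊗ₖ (Y ⊗ₖ (1 : Matrix (c₁ × c₂) (c₁ × c₂) ℂ))) * triangleState ρa ρb ρc).trace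
      = ((leftSlice (ptrace₁ ρb) X ⊗ₖ rightSlice (ptrace₂ ρa) Y) * ρc).trace := by
  induction X using kronecker_induction with
  | zero => simp only [map_zero, zero_kronecker, Matrix.zero_mul, trace_zero]
  | add X X' hX hX' => simp only [map_add, add_kronecker, Matrix.add_mul, trace_add, hX, hX']
  | kronecker x₁ x₂ =>
    induction Y using kronecker_induction with
    | zero =>
      simp only [map_zero, zero_kronecker, kronecker_zero, Matrix.zero_mul, trace_zero]
    | add Y Y' hY hY' =>
      simp only [map_add, add_kronecker, kronecker_add, Matrix.add_mul, trace_add, hY, hY']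
    | kronecker y₁ y₂ =>
      rw [← one_kronecker_one, trace_kronecker_kronecker_mul_triangleState,
        trace_one_kronecker_mul, trace_kronecker_one_mul, leftSlice_kronecker,
        rightSlice_kronecker, smul_kronecker, kronecker_smul, Matrix.smul_mul, Matrix.smul_mul,
        trace_smul, trace_smul, smul_eq_mul, smul_eq_mul]
      ring

end Triangle

section LocalSum

variable {nA nB nC ι : Type*}

/-- The cyclic relabelling of the three parties. -/
def rotateEquiv (α β γ : Type*) : β × γ × α ≃ α × β × γ :=
  (Equiv.prodAssoc β γ α).symm.trans (Equiv.prodComm (β × γ) α)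

variable [DecidableEq nA] [DecidableEq nB] [DecidableEq nC]

/-- The sum `X ⊗ 1 ⊗ 1 + 1 ⊗ Y ⊗ 1 + 1 ⊗ 1 ⊗ Z` of one local observable per party; a single
party's observable is recovered by setting the other two to `0`. -/
def localSum (X : Matrix nA nA ℂ) (Y : Matrix nB nB ℂ) (Z : Matrix nC nC ℂ) :
    Matrix (nA × nB × nC) (nA × nB × nC) ℂ :=
  X ⊗ₖ (1 ⊗ₖ 1) + 1 ⊗ₖ (Y ⊗ₖ 1) + 1 ⊗ₖ (1 ⊗ₖ Z)

theorem localSum_rotate (X : Matrix nA nA ℂ) (Y : Matrix nB nB ℂ) (Z : Matrix nC nC ℂ) :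
    (localSum X Y Z).submatrix (rotateEquiv nA nB nC) (rotateEquiv nA nB nC)
      = localSum Y Z X := by
  ext i j
  simp only [localSum, submatrix_apply, Matrix.add_apply, kroneckerMap_apply, rotateEquiv,
    Equiv.trans_apply, Equiv.prodAssoc_symm_apply, Equiv.prodComm_apply, Prod.swap]
  ring

theorem covMat_localSum [Fintype nA] [Fintype nB] [Fintype nC]
    (A : ι → Matrix nA nA ℂ) (B : ι → Matrix nB nB ℂ) (C : ι → Matrix nC nC ℂ)
    (ρ : Matrix (nA × nB × nC) (nA × nB × nC) ℂ) :
    covMat (fun p => localSum (A p) (B p) (C p)) ρ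
      = covMat (fun p => localSum (A p) (B p) 0) ρ + covMat (fun p => localSum 0 (B p) (C p)) ρ
        + covMat (fun p => localSum (A p) 0 (C p)) ρ
        - (covMat (fun p => localSum (A p) 0 0) ρ + covMat (fun p => localSum 0 (B p) 0) ρ
          + covMat (fun p => localSum 0 0 (C p)) ρ) := by
  simp only [localSum, zero_kronecker, kronecker_zero, add_zero, zero_add]
  exact covMat_add_add _ _ _ ρ

end LocalSum

section NetworkState

variable {a₁ a₂ b₁ b₂ c₁ c₂ nA nB nC lA lB lC ι : Type*}
  [Fintype a₁] [Fintype a₂] [Fintype b₁] [Fintype b₂] [Fintype c₁] [Fintype c₂]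
  [Fintype lA] [Fintype lB] [Fintype lC]
  {ρa : Matrix (b₂ × c₁) (b₂ × c₁) ℂ} {ρb : Matrix (c₂ × a₁) (c₂ × a₁) ℂ}
  {ρc : Matrix (a₂ × b₁) (a₂ × b₁) ℂ} {KA : lA → Matrix nA (a₁ × a₂) ℂ}
  {KB : lB → Matrix nB (b₁ × b₂) ℂ} {KC : lC → Matrix nC (c₁ × c₂) ℂ}

/-- The triangle network state with local channels `(E_A ⊗ E_B ⊗ E_C)(ρ_BTN)`, for arbitrary
finite-dimensional local systems. -/
def networkState (KA : lA → Matrix nA (a₁ × a₂) ℂ) (KB : lB → Matrix nB (b₁ × b₂) ℂ)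
    (KC : lC → Matrix nC (c₁ × c₂) ℂ) (ρa : Matrix (b₂ × c₁) (b₂ × c₁) ℂ)
    (ρb : Matrix (c₂ × a₁) (c₂ × a₁) ℂ) (ρc : Matrix (a₂ × b₁) (a₂ × b₁) ℂ) :
    Matrix (nA × nB × nC) (nA × nB × nC) ℂ :=
  krausMap (krausProd KA (krausProd KB KC)) (triangleState ρa ρb ρc)

theorem networkState_rotate :
    (networkState KA KB KC ρa ρb ρc).submatrix (rotateEquiv nA nB nC) (rotateEquiv nA nB nC)
      = networkState KB KC KA ρb ρc ρa := by
  rw [networkState, networkState, krausMap_submatrix_equiv _ _ (rotateEquiv lA lB lC)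
    (rotateEquiv nA nB nC) (rotateEquiv (a₁ × a₂) (b₁ × b₂) (c₁ × c₂))]
  congr 1
  · ext t i j
    exact (mul_comm _ _).trans (mul_assoc _ _ _)
  · ext i j
    exact (mul_comm _ _).trans (mul_assoc _ _ _)

variable [Fintype nA] [Fintype nB] [Fintype nC]

theorem trace_kronecker_kronecker_one_mul_networkState [DecidableEq a₂] [DecidableEq b₁]
    [DecidableEq c₁] [DecidableEq c₂] [DecidableEq nC] (hKC : ∑ t, (KC t)ᴴ * KC t = 1)
    (X : Matrix nA nA ℂ) (Y : Matrix nB nB ℂ) :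
    ((X ⊗ₖ (Y ⊗ₖ (1 : Matrix nC nC ℂ))) * networkState KA KB KC ρa ρb ρc).trace
      = ((leftSlice (ptrace₁ ρb) (krausDual KA X) ⊗ₖ rightSlice (ptrace₂ ρa) (krausDual KB Y))
          * ρc).trace := by
  rw [networkState, trace_mul_krausMap, krausDual_krausProd_kronecker,
    krausDual_krausProd_kronecker, krausDual_one hKC,
    trace_kronecker_kronecker_one_mul_triangleState]

variable [DecidableEq nA] [DecidableEq nB] [DecidableEq nC]

theorem covMat_localSum_rotate (A : ι → Matrix nA nA ℂ) (B : ι → Matrix nB nB ℂ)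
    (C : ι → Matrix nC nC ℂ) :
    covMat (fun p => localSum (A p) (B p) (C p)) (networkState KA KB KC ρa ρb ρc)
      = covMat (fun p => localSum (B p) (C p) (A p)) (networkState KB KC KA ρb ρc ρa) := by
  rw [← covMat_submatrix_equiv (rotateEquiv nA nB nC), networkState_rotate]
  simp only [localSum_rotate]

variable [DecidableEq b₁] [DecidableEq b₂] [DecidableEq c₁] [DecidableEq c₂]

theorem covMat_localSum_first (hKB : ∑ t, (KB t)ᴴ * KB t = 1) (hKC : ∑ t, (KC t)ᴴ * KC t = 1)
    (hρa : IsDensity ρa) (A : ι → Matrix nA nA ℂ) :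
    covMat (fun p => localSum (A p) (0 : Matrix nB nB ℂ) (0 : Matrix nC nC ℂ))
        (networkState KA KB KC ρa ρb ρc)
      = covMat A (krausMap KA (ptrace₁ ρb ⊗ₖ ptrace₂ ρc)) := by
  classical
  have reduced_state : ∀ X : Matrix nA nA ℂ,
      ((X ⊗ₖ ((1 : Matrix nB nB ℂ) ⊗ₖ (1 : Matrix nC nC ℂ)))
        * networkState KA KB KC ρa ρb ρc).trace
        = (X * krausMap KA (ptrace₁ ρb ⊗ₖ ptrace₂ ρc)).trace := fun X => by
    rw [trace_kronecker_kronecker_one_mul_networkState hKC, krausDual_one hKB,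
      rightSlice_one hρa.ptrace₂.2, trace_kronecker_one_mul, trace_mul_krausMap,
      trace_mul_kronecker_eq_leftSlice]
  simp only [localSum, zero_kronecker, kronecker_zero, add_zero]
  refine covMat_congr (fun i => reduced_state _) fun i j => ?_
  simp only [← mul_kronecker_mul, Matrix.one_mul, reduced_state]

variable [DecidableEq a₁] [DecidableEq a₂]

theorem covMat_localSum_pair_sub (hKA : ∑ t, (KA t)ᴴ * KA t = 1)
    (hKB : ∑ t, (KB t)ᴴ * KB t = 1) (hKC : ∑ t, (KC t)ᴴ * KC t = 1) (hρa : IsDensity ρa)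
    (hρb : IsDensity ρb) (A : ι → Matrix nA nA ℂ) (B : ι → Matrix nB nB ℂ) :
    covMat (fun p => localSum (A p) (B p) 0) (networkState KA KB KC ρa ρb ρc)
        - (covMat (fun p => localSum (A p) 0 0) (networkState KA KB KC ρa ρb ρc)
          + covMat (fun p => localSum 0 (B p) 0) (networkState KA KB KC ρa ρb ρc))
      = covMat (fun p => leftSlice (ptrace₁ ρb) (krausDual KA (A p)) ⊗ₖ 1
            + 1 ⊗ₖ rightSlice (ptrace₂ ρa) (krausDual KB (B p))) ρc
        - (covMat (fun p => leftSlice (ptrace₁ ρb) (krausDual KA (A p))) (ptrace₂ ρc)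
          + covMat (fun p => rightSlice (ptrace₂ ρa) (krausDual KB (B p))) (ptrace₁ ρc)) := by
  have moment := trace_kronecker_kronecker_one_mul_networkState (KA := KA) (KB := KB)
    (ρa := ρa) (ρb := ρb) (ρc := ρc) hKC
  rw [← covMat_kronecker_one, ← covMat_one_kronecker]
  simp only [localSum, zero_kronecker, kronecker_zero, add_zero, zero_add]
  refine covMat_add_sub_congr (fun i => ?_) (fun i => ?_) (fun i j => ?_) fun i j => ?_
  · rw [moment, krausDual_one hKB, rightSlice_one hρa.ptrace₂.2]
  · rw [moment, krausDual_one hKA, leftSlice_one hρb.ptrace₁.2]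
  · simp only [← mul_kronecker_mul, Matrix.one_mul, Matrix.mul_one, moment]
  · simp only [← mul_kronecker_mul, Matrix.one_mul, Matrix.mul_one, moment]

theorem covMat_localSum_pair (hKA : ∑ t, (KA t)ᴴ * KA t = 1) (hKB : ∑ t, (KB t)ᴴ * KB t = 1)
    (hKC : ∑ t, (KC t)ᴴ * KC t = 1) (hρa : IsDensity ρa) (hρb : IsDensity ρb)
    (A : ι → Matrix nA nA ℂ) (B : ι → Matrix nB nB ℂ) :
    covMat (fun p => localSum (A p) (B p) 0) (networkState KA KB KC ρa ρb ρc)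
      = linkMatrix KA KB ρa ρb ρc A B
        + covMat (fun p => rightSlice (ptrace₂ ρc) (krausDual KA (A p))) (ptrace₁ ρb)
        + (covMat B (krausMap KB (ptrace₁ ρc ⊗ₖ ptrace₂ ρa))
          - covMat (fun p => rightSlice (ptrace₂ ρa) (krausDual KB (B p))) (ptrace₁ ρc)) := by
  rw [← sub_add_cancel (covMat (fun p => localSum (A p) (B p) 0) _),
    covMat_localSum_pair_sub hKA hKB hKC hρa hρb, covMat_localSum_first hKB hKC hρa,
    covMat_localSum_rotate (fun _ => 0) B fun _ => 0, covMat_localSum_first hKC hKA hρb,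
    linkMatrix, partyResidual]
  abel

theorem covMat_localSum_networkState (hKA : ∑ t, (KA t)ᴴ * KA t = 1)
    (hKB : ∑ t, (KB t)ᴴ * KB t = 1) (hKC : ∑ t, (KC t)ᴴ * KC t = 1) (hρa : IsDensity ρa)
    (hρb : IsDensity ρb) (hρc : IsDensity ρc) (A : ι → Matrix nA nA ℂ) (B : ι → Matrix nB nB ℂ)
    (C : ι → Matrix nC nC ℂ) :
    covMat (fun p => localSum (A p) (B p) (C p)) (networkState KA KB KC ρa ρb ρc)
      = linkMatrix KA KB ρa ρb ρc A B + linkMatrix KC KA ρc ρa ρb C A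
        + linkMatrix KB KC ρb ρc ρa B C := by
  rw [covMat_localSum, covMat_localSum_pair hKA hKB hKC hρa hρb,
    covMat_localSum_rotate (fun _ => 0) B C, covMat_localSum_pair hKB hKC hKA hρb hρc,
    ← covMat_localSum_rotate C A fun _ => 0, covMat_localSum_pair hKC hKA hKB hρc hρa,
    covMat_localSum_first hKB hKC hρa, covMat_localSum_rotate (fun _ => 0) B fun _ => 0,
    covMat_localSum_first hKC hKA hρb, ← covMat_localSum_rotate C (fun _ => 0) fun _ => 0,
    covMat_localSum_first hKA hKB hρc]
  abel

end NetworkState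

section BlockDecomposition

variable {α β γ : Type*}

/-- The block matrix on `α ⊕ β ⊕ γ` with diagonal blocks `(X, Y, 0)`, off-diagonal block `E`
between the first two sectors, and zeros elsewhere. -/
def blockAB (X : Matrix α α ℂ) (Y : Matrix β β ℂ) (E : Matrix α β ℂ) :
    Matrix (α ⊕ (β ⊕ γ)) (α ⊕ (β ⊕ γ)) ℂ :=
  fromBlocks X (fromCols E 0) (fromRows Eᴴ 0) (fromBlocks Y 0 0 0)

/-- The block matrix on `α ⊕ β ⊕ γ` with diagonal blocks `(X, 0, Z)`, off-diagonal block `F`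
between the first and the last sector, and zeros elsewhere. -/
def blockAC (X : Matrix α α ℂ) (Z : Matrix γ γ ℂ) (F : Matrix α γ ℂ) :
    Matrix (α ⊕ (β ⊕ γ)) (α ⊕ (β ⊕ γ)) ℂ :=
  fromBlocks X (fromCols 0 F) (fromRows 0 Fᴴ) (fromBlocks 0 0 0 Z)

/-- The block matrix on `α ⊕ β ⊕ γ` with diagonal blocks `(0, Y, Z)`, off-diagonal block `G`
between the last two sectors, and zeros elsewhere. -/
def blockBC (Y : Matrix β β ℂ) (Z : Matrix γ γ ℂ) (G : Matrix β γ ℂ) :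
    Matrix (α ⊕ (β ⊕ γ)) (α ⊕ (β ⊕ γ)) ℂ :=
  fromBlocks 0 0 0 (fromBlocks Y G Gᴴ Z)

/-- The triangle-network decomposability of a covariance matrix: it is a sum of three positive
semidefinite matrices, one per source, each supported on the two parties the source links. The
off-diagonal blocks are forced to be those of `Γ`, so only the splitting of the diagonal blocks is
existentially quantified. -/
def IsTriangleDecomposable (Γ : Matrix (α ⊕ (β ⊕ γ)) (α ⊕ (β ⊕ γ)) ℂ) : Prop :=
  ∃ (ΥA1 ΥA2 : Matrix α α ℂ) (ΥB1 ΥB2 : Matrix β β ℂ) (ΥC1 ΥC2 : Matrix γ γ ℂ),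
    ΥA1.IsHermitian ∧ ΥA2.IsHermitian ∧ ΥB1.IsHermitian ∧ ΥB2.IsHermitian ∧
    ΥC1.IsHermitian ∧ ΥC2.IsHermitian ∧
    ∃ Sc Sb Sa : Matrix (α ⊕ (β ⊕ γ)) (α ⊕ (β ⊕ γ)) ℂ,
      Sc = blockAB ΥA2 ΥB1 Γ.toBlocks₁₂.toCols₁ ∧ Sb = blockAC ΥA1 ΥC2 Γ.toBlocks₁₂.toCols₂ ∧
      Sa = blockBC ΥB2 ΥC1 Γ.toBlocks₂₂.toBlocks₁₂ ∧ Γ = Sc + Sb + Sa ∧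
      Sc.PosSemidef ∧ Sb.PosSemidef ∧ Sa.PosSemidef

theorem column_eq_zero_of_row_eq_zero {S : Matrix α α ℂ} (hS : S.IsHermitian) {q : α}
    (hq : ∀ p, S q p = 0) (p : α) : S p q = 0 := by
  rw [← hS.apply, hq, star_zero]

variable {S : Matrix (α ⊕ (β ⊕ γ)) (α ⊕ (β ⊕ γ)) ℂ}

theorem eq_blockAB (hS : S.IsHermitian) (hC : ∀ k q, S (.inr (.inr k)) q = 0) :
    S = blockAB S.toBlocks₁₁ S.toBlocks₂₂.toBlocks₁₁ S.toBlocks₁₂.toCols₁ := by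
  ext (i | j | k) (i' | j' | k')
  all_goals first
    | rfl | exact (hS.apply _ _).symm | exact hC _ _
    | exact column_eq_zero_of_row_eq_zero hS (hC _) _

theorem eq_blockAC (hS : S.IsHermitian) (hB : ∀ j q, S (.inr (.inl j)) q = 0) :
    S = blockAC S.toBlocks₁₁ S.toBlocks₂₂.toBlocks₂₂ S.toBlocks₁₂.toCols₂ := by
  ext (i | j | k) (i' | j' | k')
  all_goals first
    | rfl | exact (hS.apply _ _).symm | exact hB _ _
    | exact column_eq_zero_of_row_eq_zero hS (hB _) _

theorem eq_blockBC (hS : S.IsHermitian) (hA : ∀ i q, S (.inl i) q = 0) :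
    S = blockBC S.toBlocks₂₂.toBlocks₁₁ S.toBlocks₂₂.toBlocks₂₂ S.toBlocks₂₂.toBlocks₁₂ := by
  ext (i | j | k) (i' | j' | k')
  all_goals first
    | rfl | exact (hS.apply _ _).symm | exact hA _ _
    | exact column_eq_zero_of_row_eq_zero hS (hA _) _

theorem isTriangleDecomposable_add {Sc Sb Sa : Matrix (α ⊕ (β ⊕ γ)) (α ⊕ (β ⊕ γ)) ℂ}
    (hc : Sc.PosSemidef) (hb : Sb.PosSemidef) (ha : Sa.PosSemidef)
    (hcC : ∀ k q, Sc (.inr (.inr k)) q = 0) (hbB : ∀ j q, Sb (.inr (.inl j)) q = 0)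
    (haA : ∀ i q, Sa (.inl i) q = 0) : IsTriangleDecomposable (Sc + Sb + Sa) := by
  have block_AB : (Sc + Sb + Sa).toBlocks₁₂.toCols₁ = Sc.toBlocks₁₂.toCols₁ := by
    ext i j
    simp only [toCols₁_apply, toBlocks₁₂, of_apply, Matrix.add_apply, haA,
      column_eq_zero_of_row_eq_zero hb.isHermitian (hbB j), add_zero]
  have block_AC : (Sc + Sb + Sa).toBlocks₁₂.toCols₂ = Sb.toBlocks₁₂.toCols₂ := by
    ext i k
    simp only [toCols₂_apply, toBlocks₁₂, of_apply, Matrix.add_apply, haA,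
      column_eq_zero_of_row_eq_zero hc.isHermitian (hcC k), add_zero, zero_add]
  have block_BC : (Sc + Sb + Sa).toBlocks₂₂.toBlocks₁₂ = Sa.toBlocks₂₂.toBlocks₁₂ := by
    ext j k
    simp only [toBlocks₂₂, toBlocks₁₂, of_apply, Matrix.add_apply, hbB,
      column_eq_zero_of_row_eq_zero hc.isHermitian (hcC k), zero_add]
  refine ⟨Sb.toBlocks₁₁, Sc.toBlocks₁₁, Sc.toBlocks₂₂.toBlocks₁₁, Sa.toBlocks₂₂.toBlocks₁₁,
    Sa.toBlocks₂₂.toBlocks₂₂, Sb.toBlocks₂₂.toBlocks₂₂, hb.isHermitian.submatrix _,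
    hc.isHermitian.submatrix _, hc.isHermitian.submatrix _, ha.isHermitian.submatrix _,
    ha.isHermitian.submatrix _, hb.isHermitian.submatrix _, Sc, Sb, Sa, ?_, ?_, ?_, rfl,
    hc, hb, ha⟩
  · rw [block_AB, ← eq_blockAB hc.isHermitian hcC]
  · rw [block_AC, ← eq_blockAC hb.isHermitian hbB]
  · rw [block_BC, ← eq_blockBC ha.isHermitian haA]

end BlockDecomposition

theorem stmt9_general {a₁ a₂ b₁ b₂ c₁ c₂ nA nB nC lA lB lC ιA ιB ιC : Type*}
    [Fintype a₁] [Fintype a₂] [Fintype b₁] [Fintype b₂] [Fintype c₁] [Fintype c₂]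
    [Fintype nA] [Fintype nB] [Fintype nC] [Fintype lA] [Fintype lB] [Fintype lC]
    [DecidableEq a₁] [DecidableEq a₂] [DecidableEq b₁] [DecidableEq b₂]
    [DecidableEq c₁] [DecidableEq c₂] [DecidableEq nA] [DecidableEq nB] [DecidableEq nC]
    {ρa : Matrix (b₂ × c₁) (b₂ × c₁) ℂ} {ρb : Matrix (c₂ × a₁) (c₂ × a₁) ℂ}
    {ρc : Matrix (a₂ × b₁) (a₂ × b₁) ℂ}
    (hρa : IsDensity ρa) (hρb : IsDensity ρb) (hρc : IsDensity ρc)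
    {KA : lA → Matrix nA (a₁ × a₂) ℂ} {KB : lB → Matrix nB (b₁ × b₂) ℂ}
    {KC : lC → Matrix nC (c₁ × c₂) ℂ} (hKA : ∑ t, (KA t)ᴴ * KA t = 1)
    (hKB : ∑ t, (KB t)ᴴ * KB t = 1) (hKC : ∑ t, (KC t)ᴴ * KC t = 1)
    {A : ιA → Matrix nA nA ℂ} (hA : ∀ i, (A i).IsHermitian)
    {B : ιB → Matrix nB nB ℂ} (hB : ∀ j, (B j).IsHermitian)
    {C : ιC → Matrix nC nC ℂ} (hC : ∀ k, (C k).IsHermitian) :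
    IsTriangleDecomposable (covMat
      (Sum.elim (fun i => localSum (A i) 0 0)
        (Sum.elim (fun j => localSum 0 (B j) 0) (fun k => localSum 0 0 (C k))))
      (networkState KA KB KC ρa ρb ρc)) := by
  let A' : ιA ⊕ (ιB ⊕ ιC) → Matrix nA nA ℂ := Sum.elim A 0
  let B' : ιA ⊕ (ιB ⊕ ιC) → Matrix nB nB ℂ := Sum.elim 0 (Sum.elim B 0)
  let C' : ιA ⊕ (ιB ⊕ ιC) → Matrix nC nC ℂ := Sum.elim 0 (Sum.elim 0 C)
  have hA' : ∀ p, (A' p).IsHermitian := Sum.rec hA fun _ => isHermitian_zero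
  have hB' : ∀ p, (B' p).IsHermitian :=
    Sum.rec (fun _ => isHermitian_zero) (Sum.rec hB fun _ => isHermitian_zero)
  have hC' : ∀ p, (C' p).IsHermitian :=
    Sum.rec (fun _ => isHermitian_zero) (Sum.rec (fun _ => isHermitian_zero) hC)
  have padded : Sum.elim (fun i => localSum (A i) 0 0)
      (Sum.elim (fun j => localSum 0 (B j) 0) (fun k => localSum 0 0 (C k)))
      = fun p => localSum (A' p) (B' p) (C' p) := by
    ext (_ | _ | _) <;> rfl
  rw [padded, covMat_localSum_networkState hKA hKB hKC hρa hρb hρc]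
  exact isTriangleDecomposable_add (linkMatrix_posSemidef hKA hρa hρb hρc hA' hB')
    (linkMatrix_posSemidef hKC hρc hρa hρb hC' hA') (linkMatrix_posSemidef hKB hρb hρc hρa hB' hC')
    (fun _ => linkMatrix_apply_eq_zero_of_left rfl rfl)
    (fun _ => linkMatrix_apply_eq_zero_of_left rfl rfl)
    fun _ => linkMatrix_apply_eq_zero_of_left rfl rfl

section QuditNetwork

variable {d nA nB nC : ℕ}

theorem ctnState_eq_networkState {LA LB LC : ℕ} (ρa ρb ρc : Matrix (D2 d) (D2 d) ℂ)
    (KA : Fin LA → Matrix (Fin nA) (D2 d) ℂ) (KB : Fin LB → Matrix (Fin nB) (D2 d) ℂ)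
    (KC : Fin LC → Matrix (Fin nC) (D2 d) ℂ) :
    ctnState ρa ρb ρc KA KB KC = networkState KA KB KC ρa ρb ρc := by
  have by_source := krausMap_submatrix_equiv (krausProd KA (krausProd KB KC))
    (triangleState ρa ρb ρc) (Equiv.refl _) id partiesEquivSources.symm
  rw [submatrix_id_id] at by_source
  rw [networkState, by_source, triangleState, submatrix_submatrix,
    Equiv.self_comp_symm, submatrix_id_id]
  have global_eq : ∀ l m n, globalKraus (KA l) (KB m) (KC n)
      = (krausProd KA (krausProd KB KC) (l, m, n)).submatrix id partiesEquivSources.symm := by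
    intro l m n
    ext i j
    exact mul_assoc _ _ _
  simp only [ctnState, krausMap, Fintype.sum_prod_type, Equiv.refl_apply, global_eq, btnState]

theorem outA_eq_localSum (M : Matrix (Fin nA) (Fin nA) ℂ) :
    (outA M : Matrix (Fin nA × Fin nB × Fin nC) _ ℂ) = localSum M 0 0 := by
  simp only [outA, localSum, zero_kronecker, kronecker_zero, add_zero, one_kronecker_one]

theorem outB_eq_localSum (M : Matrix (Fin nB) (Fin nB) ℂ) :
    (outB M : Matrix (Fin nA × Fin nB × Fin nC) _ ℂ) = localSum 0 M 0 := by
  ext i j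
  simp only [outB, localSum, zero_kronecker, kronecker_zero, add_zero, zero_add, of_apply,
    kroneckerMap_apply, one_apply, ite_and, mul_ite, mul_one, mul_zero, ite_mul, one_mul, zero_mul]
  split_ifs <;> rfl

theorem outC_eq_localSum (M : Matrix (Fin nC) (Fin nC) ℂ) :
    (outC M : Matrix (Fin nA × Fin nB × Fin nC) _ ℂ) = localSum 0 0 M := by
  simp only [outC, localSum, zero_kronecker, kronecker_zero, zero_add]

end QuditNetwork

/-- Block decomposition for covariance matrices of triangle
network states with local channels: `Γ(ρ_CTN) = S_c + S_b + S_a`, where each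
summand is positive semidefinite, carries the corresponding off-diagonal block
`γ_E`, `γ_F`, `γ_G` of `Γ`, has Hermitian diagonal blocks `Υ`, and vanishes on
the remaining sector. -/
theorem stmt9 {d nA nB nC LA LB LC kA kB kC : ℕ} (hd : 1 ≤ d)
    (ρa ρb ρc : Matrix (D2 d) (D2 d) ℂ)
    (hρa : IsDensity ρa) (hρb : IsDensity ρb) (hρc : IsDensity ρc)
    (KA : Fin LA → Matrix (Fin nA) (D2 d) ℂ)
    (KB : Fin LB → Matrix (Fin nB) (D2 d) ℂ)
    (KC : Fin LC → Matrix (Fin nC) (D2 d) ℂ)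
    (hKA : ∑ l, (KA l)ᴴ * KA l = 1)
    (hKB : ∑ l, (KB l)ᴴ * KB l = 1)
    (hKC : ∑ l, (KC l)ᴴ * KC l = 1)
    (A : Fin kA → Matrix (Fin nA) (Fin nA) ℂ) (hA : ∀ i, (A i).IsHermitian)
    (B : Fin kB → Matrix (Fin nB) (Fin nB) ℂ) (hB : ∀ j, (B j).IsHermitian)
    (C : Fin kC → Matrix (Fin nC) (Fin nC) ℂ) (hC : ∀ k, (C k).IsHermitian)
    (Γ : Matrix (Fin kA ⊕ (Fin kB ⊕ Fin kC)) (Fin kA ⊕ (Fin kB ⊕ Fin kC)) ℂ)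
    (hΓ : Γ = covMat
      (Sum.elim (fun i => outA (A i))
        (Sum.elim (fun j => outB (B j)) (fun k => outC (C k))))
      (ctnState ρa ρb ρc KA KB KC)) :
    ∃ (ΥA1 ΥA2 : Matrix (Fin kA) (Fin kA) ℂ)
      (ΥB1 ΥB2 : Matrix (Fin kB) (Fin kB) ℂ)
      (ΥC1 ΥC2 : Matrix (Fin kC) (Fin kC) ℂ),
      ΥA1.IsHermitian ∧ ΥA2.IsHermitian ∧ ΥB1.IsHermitian ∧ ΥB2.IsHermitian ∧
      ΥC1.IsHermitian ∧ ΥC2.IsHermitian ∧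
      ∃ Sc Sb Sa :
          Matrix (Fin kA ⊕ (Fin kB ⊕ Fin kC)) (Fin kA ⊕ (Fin kB ⊕ Fin kC)) ℂ,
        -- S_c : diagonal blocks (Υ^A_2, Υ^B_1, 0), off-diagonal block γ_E
        (Sc = Matrix.of fun p q => match p, q with
          | Sum.inl m, Sum.inl m' => ΥA2 m m'
          | Sum.inl m, Sum.inr (Sum.inl n) => Γ (Sum.inl m) (Sum.inr (Sum.inl n))
          | Sum.inr (Sum.inl n), Sum.inl m =>
              star (Γ (Sum.inl m) (Sum.inr (Sum.inl n)))
          | Sum.inr (Sum.inl n), Sum.inr (Sum.inl n') => ΥB1 n n'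
          | _, _ => 0) ∧
        -- S_b : diagonal blocks (Υ^A_1, 0, Υ^C_2), off-diagonal block γ_F
        (Sb = Matrix.of fun p q => match p, q with
          | Sum.inl m, Sum.inl m' => ΥA1 m m'
          | Sum.inl m, Sum.inr (Sum.inr k) => Γ (Sum.inl m) (Sum.inr (Sum.inr k))
          | Sum.inr (Sum.inr k), Sum.inl m =>
              star (Γ (Sum.inl m) (Sum.inr (Sum.inr k)))
          | Sum.inr (Sum.inr k), Sum.inr (Sum.inr k') => ΥC2 k k'
          | _, _ => 0) ∧
        -- S_a : diagonal blocks (0, Υ^B_2, Υ^C_1), off-diagonal block γ_G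
        (Sa = Matrix.of fun p q => match p, q with
          | Sum.inr (Sum.inl n), Sum.inr (Sum.inl n') => ΥB2 n n'
          | Sum.inr (Sum.inl n), Sum.inr (Sum.inr k) =>
              Γ (Sum.inr (Sum.inl n)) (Sum.inr (Sum.inr k))
          | Sum.inr (Sum.inr k), Sum.inr (Sum.inl n) =>
              star (Γ (Sum.inr (Sum.inl n)) (Sum.inr (Sum.inr k)))
          | Sum.inr (Sum.inr k), Sum.inr (Sum.inr k') => ΥC1 k k'
          | _, _ => 0) ∧
        Γ = Sc + Sb + Sa ∧
        Sc.PosSemidef ∧ Sb.PosSemidef ∧ Sa.PosSemidef := by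
  obtain ⟨ΥA1, ΥA2, ΥB1, ΥB2, ΥC1, ΥC2, hA1, hA2, hB1, hB2, hC1, hC2, Sc, Sb, Sa, hSc, hSb, hSa,
    hsum, hpos⟩ : IsTriangleDecomposable Γ := by
    simpa only [hΓ, ctnState_eq_networkState, outA_eq_localSum, outB_eq_localSum,
      outC_eq_localSum] using stmt9_general hρa hρb hρc hKA hKB hKC hA hB hC
  refine ⟨ΥA1, ΥA2, ΥB1, ΥB2, ΥC1, ΥC2, hA1, hA2, hB1, hB2, hC1, hC2, Sc, Sb, Sa, hSc.trans ?_,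
    hSb.trans ?_, hSa.trans ?_, hsum, hpos⟩
  all_goals ext (_ | _ | _) (_ | _ | _) <;> rfl
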